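/- Let S be any edit sequence of schema-preserving edit operations transforming an RLT T₁ into an RLT T₂, with induced mapping M (pairing nodes of T₁ that persist through S with their images in T₂), and let N₁ and N₂ be the sets of nodes of T₁ and T₂ not occurring in M. Then N₁ is closed under taking descendants in T₁ and N₂ is closed under taking descendants in T₂; that is, only whole subtrees are deleted from T₁ and only whole subtrees are inserted into T₂. -/

import Mathlib

/- Formalization framework for "Tree edit distance for hierarchical data
compatible with HMIL paradigm".

Rooted labeled trees (RLTs): `Value` leaves carry a label `l : L` with data type
`τ l : DT`; `Bag` nodes have an unordered finite collection of children
(represented by a `List` together with free, zero-cost permutation edit steps,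
which realizes the multiset semantics); `Object` nodes have children indexed by
pairwise distinct string edge-labels (an association list with `Nodup` keys,
again with free reordering since it represents a finite map).  The empty tree Λ
is represented by `none : OTree L`. -/

namespace TED

inductive PreRLT (L : Type) : Type where
  | value : L → PreRLT L
  | bag   : List (PreRLT L) → PreRLT L
  | obj   : List (String × PreRLT L) → PreRLT L

namespace PreRLT

variable {L DT : Type}

/-- Node types ν: Value, Bag, Object. -/
inductive NT : Type where
  | value | bag | obj
deriving DecidableEq

/-- The kind of a node: its node type together with its label (Bag and Object
nodes implicitly carry the null label). -/
inductive NodeKind (L : Type) : Type where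
  | value : L → NodeKind L
  | bag : NodeKind L
  | obj : NodeKind L

def nt : PreRLT L → NT
  | .value _ => .value
  | .bag _ => .bag
  | .obj _ => .obj

def kind : PreRLT L → NodeKind L
  | .value l => .value l
  | .bag _ => .bag
  | .obj _ => .obj

def children : PreRLT L → List (PreRLT L)
  | .value _ => []
  | .bag cs => cs
  | .obj cs => cs.map Prod.snd

/-- A leaf is a node with no children (a Value node, an empty Bag or an empty
Object). -/
def IsLeaf (t : PreRLT L) : Prop := t.children = []

/-- Well-formedness: the edge labels of every Object node are pairwise
distinct. -/
inductive WF : PreRLT L → Prop where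
  | value (l : L) : WF (.value l)
  | bag {cs : List (PreRLT L)} : (∀ c ∈ cs, WF c) → WF (.bag cs)
  | obj {cs : List (String × PreRLT L)} :
      (cs.map Prod.fst).Nodup → (∀ p ∈ cs, WF p.2) → WF (.obj cs)

end PreRLT

open PreRLT

/-- Possibly empty rooted labeled tree; `none` is the empty tree Λ. -/
abbrev OTree (L : Type) := Option (PreRLT L)

def WFO {L : Type} : OTree L → Prop
  | none => True
  | some t => t.WF

/-- The cost function γ.  `rel l l'` is the cost of relabeling a Value node
(used only when `τ l = τ l'`), and `del k` is the cost γ(v, λ) of deleting a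
node of kind `k`; insertion cost γ(λ, v) equals the deletion cost γ(v, λ).
γ is a metric on labels of equal data type. -/
structure Cost (L DT : Type) (τ : L → DT) where
  rel : L → L → ℝ
  del : PreRLT.NodeKind L → ℝ
  del_nonneg : ∀ k, 0 ≤ del k
  rel_self : ∀ l, rel l l = 0
  rel_indisc : ∀ l l', τ l = τ l' → rel l l' = 0 → l = l'
  rel_symm : ∀ l l', rel l l' = rel l' l
  rel_triangle : ∀ l₁ l₂ l₃, τ l₁ = τ l₂ → τ l₂ = τ l₃ →
      rel l₁ l₃ ≤ rel l₁ l₂ + rel l₂ l₃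

variable {L DT : Type} {τ : L → DT}

/-- Schema-preserving edit steps on nonempty trees: relabel a Value node to a
label of the same data type, delete a leaf, insert a leaf (at an Object node
only with a fresh edge label).  The `bagPerm`/`objPerm` steps are invisible,
zero-cost reorderings of the list representation of the unordered children
collections. -/
inductive Estep (τ : L → DT) : PreRLT L → PreRLT L → Type where
  | relabel (l l' : L) (h : τ l = τ l') : Estep τ (.value l) (.value l')
  | bagPerm (cs : List (PreRLT L)) (σ : Equiv.Perm (Fin cs.length)) :
      Estep τ (.bag cs) (.bag (List.ofFn fun i => cs.get (σ i)))
  | objPerm (cs : List (String × PreRLT L)) (σ : Equiv.Perm (Fin cs.length)) :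
      Estep τ (.obj cs) (.obj (List.ofFn fun i => cs.get (σ i)))
  | bagCongr (pre post : List (PreRLT L)) {t t' : PreRLT L} (e : Estep τ t t') :
      Estep τ (.bag (pre ++ t :: post)) (.bag (pre ++ t' :: post))
  | objCongr (pre post : List (String × PreRLT L)) (k : String) {t t' : PreRLT L}
      (e : Estep τ t t') :
      Estep τ (.obj (pre ++ (k, t) :: post)) (.obj (pre ++ (k, t') :: post))
  | bagDel (cs : List (PreRLT L)) (t : PreRLT L) (h : t.IsLeaf) :
      Estep τ (.bag (t :: cs)) (.bag cs)
  | bagIns (cs : List (PreRLT L)) (t : PreRLT L) (h : t.IsLeaf) :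
      Estep τ (.bag cs) (.bag (t :: cs))
  | objDel (cs : List (String × PreRLT L)) (k : String) (t : PreRLT L) (h : t.IsLeaf) :
      Estep τ (.obj ((k, t) :: cs)) (.obj cs)
  | objIns (cs : List (String × PreRLT L)) (k : String) (t : PreRLT L) (h : t.IsLeaf)
      (hk : k ∉ cs.map Prod.fst) :
      Estep τ (.obj cs) (.obj ((k, t) :: cs))

/-- Cost of a single edit step. -/
def Estep.cost (C : Cost L DT τ) : {t t' : PreRLT L} → Estep τ t t' → ℝ
  | _, _, .relabel l l' _ => C.rel l l'
  | _, _, .bagPerm _ _ => 0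
  | _, _, .objPerm _ _ => 0
  | _, _, .bagCongr _ _ e => e.cost C
  | _, _, .objCongr _ _ _ e => e.cost C
  | _, _, .bagDel _ t _ => C.del t.kind
  | _, _, .bagIns _ t _ => C.del t.kind
  | _, _, .objDel _ _ t _ => C.del t.kind
  | _, _, .objIns _ _ t _ _ => C.del t.kind

/-- Edit steps on possibly empty trees: the root leaf may be deleted, and a
root leaf may be inserted into the empty tree. -/
inductive EstepO (τ : L → DT) : OTree L → OTree L → Type where
  | inner {t t' : PreRLT L} (e : Estep τ t t') : EstepO τ (some t) (some t')
  | delRoot (t : PreRLT L) (h : t.IsLeaf) : EstepO τ (some t) none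
  | insRoot (t : PreRLT L) (h : t.IsLeaf) : EstepO τ none (some t)

def EstepO.cost (C : Cost L DT τ) : {T T' : OTree L} → EstepO τ T T' → ℝ
  | _, _, .inner e => e.cost C
  | _, _, .delRoot t _ => C.del t.kind
  | _, _, .insRoot t _ => C.del t.kind

/-- An edit sequence S = s₁ ∘ ⋯ ∘ s_k transforming one tree into another. -/
inductive Eseq (τ : L → DT) : OTree L → OTree L → Type where
  | nil (T : OTree L) : Eseq τ T T
  | cons {T T' T'' : OTree L} (s : EstepO τ T T') (S : Eseq τ T' T'') : Eseq τ T T''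

/-- γ(S), the total cost of an edit sequence. -/
def Eseq.cost (C : Cost L DT τ) : {T T' : OTree L} → Eseq τ T T' → ℝ
  | _, _, .nil _ => 0
  | _, _, .cons s S => s.cost C + S.cost C

/-- The tree edit distance d(T, T'): the minimum of γ(S) over all edit
sequences S transforming T into T'. -/
noncomputable def editDist (C : Cost L DT τ) (T T' : OTree L) : ℝ :=
  sInf {c : ℝ | ∃ S : Eseq τ T T', S.cost C = c}

end TED
namespace TED

open PreRLT

variable {L DT : Type} {τ : L → DT}

/-- Addresses of nodes in a tree: a child of a Bag node is addressed by its
position, a child of an Object node by its edge label. -/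
inductive Pstep : Type where
  | idx : ℕ → Pstep
  | key : String → Pstep
deriving DecidableEq

abbrev Path := List Pstep

/-- The subtree rooted at the node addressed by a path, if it exists. -/
def subAt : Path → PreRLT L → Option (PreRLT L)
  | [], t => some t
  | .idx n :: p, .bag cs => cs[n]?.bind (subAt p)
  | .key k :: p, .obj cs => (List.lookup k cs).bind (subAt p)
  | _, _ => none

def subAtO (T : OTree L) (p : Path) : Option (PreRLT L) :=
  T.bind (fun t => subAt p t)

/-- `p` addresses a node of `T`. -/
def IsNode (T : OTree L) (p : Path) : Prop := (subAtO T p).isSome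

/-- Two nodes have the same node type and, for Value nodes, the same data
type. -/
def SameTypePair (τ : L → DT) (t₁ t₂ : PreRLT L) : Prop :=
  t₁.nt = t₂.nt ∧ ∀ l₁ l₂, t₁ = .value l₁ → t₂ = .value l₂ → τ l₁ = τ l₂

/-- `q` addresses a (proper) descendant of the node addressed by `p`. -/
def IsDesc (p q : Path) : Prop := p <+: q ∧ q ≠ p

/-- An edit distance mapping (M, T₁, T₂). -/
structure IsMapping (τ : L → DT) (T₁ T₂ : OTree L) (M : Set (Path × Path)) : Prop where
  /-- pairs consist of a node of T₁ and a node of T₂ -/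
  nodes : ∀ pq ∈ M, IsNode T₁ pq.1 ∧ IsNode T₂ pq.2
  /-- paired nodes have the same node type and, for Value nodes, data type -/
  types : ∀ pq ∈ M, ∃ t₁ t₂, subAtO T₁ pq.1 = some t₁ ∧ subAtO T₂ pq.2 = some t₂ ∧
      SameTypePair τ t₁ t₂
  /-- the mapping is one-to-one -/
  one_to_one : ∀ pq ∈ M, ∀ pq' ∈ M, ((pq : Path × Path).1 = (pq' : Path × Path).1 ↔
      (pq : Path × Path).2 = (pq' : Path × Path).2)
  /-- parents of non-root paired nodes are paired as well -/
  parents : ∀ pq ∈ M, (pq : Path × Path).1 ≠ [] → (pq : Path × Path).2 ≠ [] →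
      ((pq : Path × Path).1.dropLast, (pq : Path × Path).2.dropLast) ∈ M
  /-- if (v, w) ∉ M then no descendant of v is paired with a descendant of w -/
  desc : ∀ p q, (p, q) ∉ M → ∀ p' q', IsDesc p p' → IsDesc q q' → (p', q') ∉ M
  /-- paired children of Object nodes are connected by equally labeled edges -/
  edge : ∀ pq ∈ M, ∀ t : PreRLT L, (pq : Path × Path).1 ≠ [] →
      subAtO T₁ (pq : Path × Path).1.dropLast = some t → t.nt = .obj →
      (pq : Path × Path).1.getLast? = (pq : Path × Path).2.getLast?

/-- γ(v → w) for a pair of mapped nodes: the relabeling cost for Value nodes,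
and 0 for the (null-labeled) inner nodes. -/
noncomputable def pairCost (C : Cost L DT τ) (T₁ T₂ : OTree L) (p q : Path) : ℝ :=
  match subAtO T₁ p, subAtO T₂ q with
  | some (.value l₁), some (.value l₂) => C.rel l₁ l₂
  | _, _ => 0

/-- γ(v, λ), the deletion (= insertion) cost of the node of `T` at `p`. -/
noncomputable def delCost (C : Cost L DT τ) (T : OTree L) (p : Path) : ℝ :=
  match subAtO T p with
  | some t => C.del t.kind
  | none => 0

/-- γ(M) = Σ_{(v,w)∈M} γ(v,w) + Σ_{v∈N₁} γ(v,λ) + Σ_{w∈N₂} γ(λ,w), where N₁, N₂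
are the nodes of T₁, T₂ not occurring in M. -/
noncomputable def mapCost (C : Cost L DT τ) (T₁ T₂ : OTree L)
    (M : Set (Path × Path)) : ℝ :=
  (∑ᶠ pq ∈ M, pairCost C T₁ T₂ (pq : Path × Path).1 (pq : Path × Path).2)
    + (∑ᶠ p ∈ {p : Path | IsNode T₁ p ∧ ∀ q, (p, q) ∉ M}, delCost C T₁ p)
    + (∑ᶠ q ∈ {q : Path | IsNode T₂ q ∧ ∀ p, (p, q) ∉ M}, delCost C T₂ q)

/-- How a single edit step moves node addresses: `e.pmap p = some q` iff the
node at `p` persists through `e` (possibly relabeled) as the node at `q`. -/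
def Estep.pmap : {t t' : PreRLT L} → Estep τ t t' → Path → Option Path
  | _, _, .relabel _ _ _, [] => some []
  | _, _, .relabel _ _ _, _ :: _ => none
  | _, _, .bagPerm _ _, [] => some []
  | _, _, .bagPerm cs σ, .idx i :: p =>
      if h : i < cs.length then some (.idx (σ.symm ⟨i, h⟩).val :: p) else none
  | _, _, .bagPerm _ _, .key _ :: _ => none
  | _, _, .objPerm _ _, [] => some []
  | _, _, .objPerm _ _, .key k :: p => some (.key k :: p)
  | _, _, .objPerm _ _, .idx _ :: _ => none
  | _, _, .bagCongr _ _ _, [] => some []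
  | _, _, .bagCongr pre _ e, .idx i :: p =>
      if i = pre.length then (e.pmap p).map (fun q => .idx i :: q)
      else some (.idx i :: p)
  | _, _, .bagCongr _ _ _, .key _ :: _ => none
  | _, _, .objCongr _ _ _ _, [] => some []
  | _, _, .objCongr _ _ k e, .key k' :: p =>
      if k' = k then (e.pmap p).map (fun q => .key k :: q)
      else some (.key k' :: p)
  | _, _, .objCongr _ _ _ _, .idx _ :: _ => none
  | _, _, .bagDel _ _ _, [] => some []
  | _, _, .bagDel _ _ _, .idx 0 :: _ => none
  | _, _, .bagDel _ _ _, .idx (i + 1) :: p => some (.idx i :: p)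
  | _, _, .bagDel _ _ _, .key _ :: _ => none
  | _, _, .bagIns _ _ _, [] => some []
  | _, _, .bagIns _ _ _, .idx i :: p => some (.idx (i + 1) :: p)
  | _, _, .bagIns _ _ _, .key _ :: _ => none
  | _, _, .objDel _ k _ _, [] => some []
  | _, _, .objDel _ k _ _, .key k' :: p =>
      if k' = k then none else some (.key k' :: p)
  | _, _, .objDel _ _ _ _, .idx _ :: _ => none
  | _, _, .objIns _ k _ _ _, [] => some []
  | _, _, .objIns _ k _ _ _, .key k' :: p =>
      if k' = k then none else some (.key k' :: p)
  | _, _, .objIns _ _ _ _ _, .idx _ :: _ => none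

def EstepO.pmap : {T T' : OTree L} → EstepO τ T T' → Path → Option Path
  | _, _, .inner e => e.pmap
  | _, _, .delRoot _ _ => fun _ => none
  | _, _, .insRoot _ _ => fun _ => none

/-- How an edit sequence moves node addresses, by composition. -/
def Eseq.pmap : {T T' : OTree L} → Eseq τ T T' → Path → Option Path
  | _, _, .nil _ => fun p => some p
  | _, _, .cons s S => fun p => (s.pmap p).bind S.pmap

/-- The mapping (M, T₁, T₂) induced by an edit sequence S : T₁ → T₂, pairing
each node of T₁ that persists (possibly relabeled) through S with its image in
T₂. -/
def Eseq.induced {T₁ T₂ : OTree L} (S : Eseq τ T₁ T₂) : Set (Path × Path) :=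
  {pq | IsNode T₁ pq.1 ∧ S.pmap pq.1 = some pq.2}

/-- The sum Σ_v γ(v, λ) of the deletion (equivalently, insertion) costs over
all nodes of a tree. -/
noncomputable def delSum (C : Cost L DT τ) : PreRLT L → ℝ
  | .value l => C.del (.value l)
  | .bag cs => C.del .bag + (cs.attach.map (fun c => delSum C c.1)).sum
  | .obj cs => C.del .obj + (cs.attach.map (fun c => delSum C c.1.2)).sum
  termination_by t => sizeOf t
  decreasing_by
  · have := List.sizeOf_lt_of_mem c.2
    simp only [PreRLT.bag.sizeOf_spec]
    omega
  · have h1 := List.sizeOf_lt_of_mem c.2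
    have h2 : sizeOf c.1.2 < sizeOf c.1 := by
      obtain ⟨a, b⟩ := c.1
      simp [Prod.mk.sizeOf_spec]
    simp only [PreRLT.obj.sizeOf_spec]
    omega

/-- Equality of trees under the multiset semantics of Bag children and the
finite-map semantics of Object children. -/
inductive TEquiv : PreRLT L → PreRLT L → Prop where
  | value (l : L) : TEquiv (.value l) (.value l)
  | bag {cs cs' : List (PreRLT L)} (l : List (PreRLT L × PreRLT L))
      (h₁ : l.map Prod.fst = cs) (h₂ : (l.map Prod.snd).Perm cs')
      (h₃ : ∀ pq ∈ l, TEquiv pq.1 pq.2) :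
      TEquiv (.bag cs) (.bag cs')
  | obj {cs cs' : List (String × PreRLT L)}
      (l : List ((String × PreRLT L) × (String × PreRLT L)))
      (h₁ : l.map Prod.fst = cs) (h₂ : (l.map Prod.snd).Perm cs')
      (hk : ∀ pq ∈ l, pq.1.1 = pq.2.1)
      (h₃ : ∀ pq ∈ l, TEquiv pq.1.2 pq.2.2) :
      TEquiv (.obj cs) (.obj cs')

/-- Equality of possibly empty trees under the multiset semantics. -/
def OEquiv : OTree L → OTree L → Prop
  | none, none => True
  | some t, some t' => TEquiv t t'
  | _, _ => False

end TED

namespace TED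

theorem Estep.pmap_take {L DT : Type} {τ : L → DT} {t t' : PreRLT L} (e : Estep τ t t') :
    ∀ (p q : Path) (n : ℕ), e.pmap p = some q → e.pmap (p.take n) = some (q.take n) := by
  induction e with
  | bagCongr pre post e ih =>
    intro p q n h
    rcases n with _ | n
    · simp [Estep.pmap]
    rcases p with _ | ⟨s | s, p⟩
    · simp [Estep.pmap] at h ⊢
      simp [← h]
    · simp only [Estep.pmap, List.take_succ_cons] at h ⊢
      split_ifs at h ⊢
      · obtain ⟨r, hr, rfl⟩ := Option.map_eq_some_iff.1 h
        simp [ih p r n hr]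
      · simp at h
        simp [← h]
    · simp [Estep.pmap] at h
  | objCongr pre post k e ih =>
    intro p q n h
    rcases n with _ | n
    · simp [Estep.pmap]
    rcases p with _ | ⟨s | s, p⟩
    · simp [Estep.pmap] at h ⊢
      simp [← h]
    · simp [Estep.pmap] at h
    · simp only [Estep.pmap, List.take_succ_cons] at h ⊢
      split_ifs at h ⊢
      · obtain ⟨r, hr, rfl⟩ := Option.map_eq_some_iff.1 h
        simp [ih p r n hr]
      · simp at h
        simp [← h]
  | _ =>
    intro p q n h
    rcases n with _ | n
    · simp [Estep.pmap]
    rcases p with _ | ⟨(_ | s) | s, p⟩ <;>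
      simp only [Estep.pmap, List.take_succ_cons, List.take_nil] at h ⊢ <;>
      (try split_ifs at h ⊢) <;> simp at h ⊢ <;> simp [← h]

theorem Eseq.pmap_take {L DT : Type} {τ : L → DT} {T T' : OTree L} (S : Eseq τ T T') :
    ∀ (p q : Path) (n : ℕ), S.pmap p = some q → S.pmap (p.take n) = some (q.take n) := by
  induction S with
  | nil T =>
    intro p q n h
    simp [Eseq.pmap] at h ⊢
    simp [h]
  | cons s S ih =>
    intro p q n h
    simp only [Eseq.pmap] at h ⊢
    obtain ⟨r, hr, hq⟩ := Option.bind_eq_some_iff.1 h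
    refine Option.bind_eq_some_iff.2 ⟨r.take n, ?_, ih r q n hq⟩
    cases s with
    | inner e => exact Estep.pmap_take e p r n hr
    | delRoot t h => simp [EstepO.pmap] at hr
    | insRoot t h => simp [EstepO.pmap] at hr

theorem subAt_take {L : Type} (p : Path) : ∀ (t : PreRLT L) (n : ℕ),
    (subAt p t).isSome → (subAt (p.take n) t).isSome := by
  induction p with
  | nil => intro t n h; simpa using h
  | cons a p ih =>
    intro t n h
    rcases n with _ | n
    · simp [subAt]
    rcases a with i | k <;> rcases t with l | cs | cs <;>
      simp only [subAt, List.take_succ_cons, Option.isSome_none, Bool.false_eq_true] at h ⊢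
    · cases hc : cs[i]? with
      | none => simp [hc] at h
      | some c => simp only [hc, Option.bind_some] at h ⊢; exact ih c n h
    · cases hc : List.lookup k cs with
      | none => simp [hc] at h
      | some c => simp only [hc, Option.bind_some] at h ⊢; exact ih c n h

theorem IsNode.take {L : Type} {T : OTree L} {p : Path} (h : IsNode T p) (n : ℕ) :
    IsNode T (p.take n) := by
  cases T with
  | none => simp [IsNode, subAtO] at h
  | some t => exact subAt_take p t n h

end TED

/-- for the mapping M induced by an edit sequence S : T₁ → T₂,
the set N₁ of nodes of T₁ not occurring in M is closed under taking
descendants in T₁, and likewise N₂ in T₂; i.e. only whole subtrees are deleted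
from T₁ and only whole subtrees are inserted into T₂. -/
theorem induced_unmapped_desc_closed {L DT : Type} (τ : L → DT)
    (T₁ T₂ : TED.OTree L) (hT₁ : TED.WFO T₁) (hT₂ : TED.WFO T₂)
    (S : TED.Eseq τ T₁ T₂) :
    (∀ p, TED.IsNode T₁ p → (∀ q, (p, q) ∉ S.induced) →
      ∀ p', TED.IsDesc p p' → TED.IsNode T₁ p' → ∀ q, (p', q) ∉ S.induced) ∧
    (∀ q, TED.IsNode T₂ q → (∀ p, (p, q) ∉ S.induced) →
      ∀ q', TED.IsDesc q q' → TED.IsNode T₂ q' → ∀ p, (p, q') ∉ S.induced) := by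
  constructor
  · intro p hp hN p' hd hp' q hq
    refine hN (q.take p.length) ⟨hp, ?_⟩
    have h := TED.Eseq.pmap_take S p' q p.length hq.2
    rwa [← List.prefix_iff_eq_take.1 hd.1] at h
  · intro q hq hN q' hd hq' p hp
    refine hN (p.take q.length) ⟨TED.IsNode.take hp.1 _, ?_⟩
    have h := TED.Eseq.pmap_take S p q' q.length hp.2
    rwa [← List.prefix_iff_eq_take.1 hd.1] at h
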